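/- For any smooth function f : ℝ^k × ℝ^m → ℝ and any natural number l, there exist smooth functions h_{i₁⋯i_{l+1}} : ℝ^k × ℝ^m → ℝ (for indices i₁,…,i_{l+1} ∈ {1,…,m}) such that f(x,y) equals its Taylor expansion in y around y = 0 up to order l, plus the remainder ∑_{i₁,…,i_{l+1}} y^{i₁}⋯y^{i_{l+1}} · h_{i₁⋯i_{l+1}}(x,y). -/

import Mathlib

/-- Partial derivative of `g` in the `i`-th `y`-direction. -/
noncomputable def partialY {k m : ℕ} (i : Fin m)
    (g : (Fin k → ℝ) × (Fin m → ℝ) → ℝ) : (Fin k → ℝ) × (Fin m → ℝ) → ℝ :=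
  fun p => fderiv ℝ g p (0, Pi.single i 1)

/-- Iterated partial derivative of `g` in the `y`-directions along a list of indices. -/
noncomputable def partialYList {k m : ℕ} :
    List (Fin m) → ((Fin k → ℝ) × (Fin m → ℝ) → ℝ) → (Fin k → ℝ) × (Fin m → ℝ) → ℝ
  | [], g => g
  | i :: is, g => partialY i (partialYList is g)

/-! Taylor's formula with integral remainder along the segment from `(x, 0)` to `(x, y)` writes
`f (x, y)` as its Taylor polynomial in `y` plus `R (x, y) (y, …, y)`, where
`R (x, y) = (l !)⁻¹ • ∫ t in 0..1, (1 - t) ^ l • D_y^{l + 1} f (x, t • y)` is a multilinear form.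
Differentiation under the integral sign shows that `R` depends smoothly on `(x, y)`, and the
functions `h` are the coefficients of `R` in a basis. -/

open MeasureTheory Set
open scoped Nat Topology

theorem exists_nhds_forall_norm_le_of_continuous {X Y G : Type*} [TopologicalSpace X]
    [TopologicalSpace Y] [SeminormedAddCommGroup G] {g : X → Y → G} (hg : Continuous ↿g)
    {K : Set Y} (hK : IsCompact K) (x₀ : X) :
    ∃ s ∈ 𝓝 x₀, ∃ C : ℝ, ∀ x ∈ s, ∀ y ∈ K, ‖g x y‖ ≤ C := by
  obtain ⟨C, hC⟩ := hK.exists_bound_of_continuousOn (f := g x₀) (by fun_prop)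
  have hopen : IsOpen {z : X × Y | ‖g z.1 z.2‖ < C + 1} :=
    isOpen_lt hg.norm continuous_const
  obtain ⟨u, v, hu, -, hxu, hKv, huv⟩ :=
    generalized_tube_lemma (isCompact_singleton (x := x₀)) hK hopen (by
      rintro ⟨x, y⟩ ⟨rfl, hy⟩
      exact (hC y hy).trans_lt (lt_add_one C))
  exact ⟨u, hu.mem_nhds (singleton_subset_iff.1 hxu), C + 1,
    fun x hx y hy => (huv (mk_mem_prod hx (hKv hy))).le⟩

theorem iteratedFDeriv_comp_prodMk_left {𝕜 E E' F : Type*} [NontriviallyNormedField 𝕜]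
    [NormedAddCommGroup E] [NormedSpace 𝕜 E] [NormedAddCommGroup E'] [NormedSpace 𝕜 E']
    [NormedAddCommGroup F] [NormedSpace 𝕜 F] {n : WithTop ℕ∞} {f : E × E' → F}
    (hf : ContDiff 𝕜 n f) {m : ℕ} (hm : m ≤ n) (x : E) (y : E') :
    iteratedFDeriv 𝕜 m (fun x => f (x, y)) x =
      (iteratedFDeriv 𝕜 m f (x, y)).compContinuousLinearMap
        fun _ => ContinuousLinearMap.inl 𝕜 E E' := by
  have hshift : ContDiff 𝕜 n fun z => f (z + (0, y)) := hf.comp (contDiff_id.add contDiff_const)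
  have hcomp := (ContinuousLinearMap.inl 𝕜 E E').iteratedFDeriv_comp_right hshift x hm
  simpa [Function.comp_def, iteratedFDeriv_comp_add_right] using hcomp

section ParametricIntegral

variable {E F : Type*} [NormedAddCommGroup E] [NormedSpace ℝ E]
  [NormedAddCommGroup F] [NormedSpace ℝ F] {μ : Measure ℝ} {a b : ℝ}

theorem intervalIntegral_continuousMultilinearMap_apply {κ : Type*} [Fintype κ]
    {q : ℝ → ContinuousMultilinearMap ℝ (fun _ : κ => E) F} (hq : IntervalIntegrable q μ a b)
    (v : κ → E) : (∫ t in a..b, q t ∂μ) v = ∫ t in a..b, q t v ∂μ := by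
  simp only [intervalIntegral.intervalIntegral_eq_integral_uIoc, smul_apply,
    ContinuousMultilinearMap.integral_apply hq.def']

variable [IsLocallyFiniteMeasure μ]

theorem intervalIntegral_continuousMultilinearMap_curryLeft {m : ℕ}
    {q : ℝ → E [×(m + 1)]→L[ℝ] F} (hq : Continuous q) :
    ∫ t in a..b, (q t).curryLeft ∂μ = (∫ t in a..b, q t ∂μ).curryLeft := by
  have hcurry : Continuous fun t => (q t).curryLeft :=
    (continuousMultilinearCurryLeftEquiv ℝ (fun _ : Fin (m + 1) => E) F).continuous.comp hq
  ext v w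
  have hcurry_apply : Continuous fun t => (q t).curryLeft v := hcurry.clm_apply continuous_const
  rw [ContinuousLinearMap.intervalIntegral_apply (hcurry.intervalIntegrable a b),
    intervalIntegral_continuousMultilinearMap_apply (hcurry_apply.intervalIntegrable a b),
    ContinuousMultilinearMap.curryLeft_apply,
    intervalIntegral_continuousMultilinearMap_apply (hq.intervalIntegrable a b)]
  rfl

theorem hasFDerivAt_intervalIntegral_of_continuous {f : E → ℝ → F} {f' : E → ℝ → E →L[ℝ] F}
    (hf : ∀ x, Continuous (f x)) (hf' : Continuous ↿f')
    (hderiv : ∀ x t, HasFDerivAt (fun y => f y t) (f' x t) x) (x₀ : E) :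
    HasFDerivAt (fun x => ∫ t in a..b, f x t ∂μ) (∫ t in a..b, f' x₀ t ∂μ) x₀ := by
  obtain ⟨s, hs, C, hC⟩ := exists_nhds_forall_norm_le_of_continuous hf' isCompact_uIcc x₀
  have hf'_cont : Continuous (f' x₀) := hf'.comp (Continuous.prodMk_right x₀)
  exact intervalIntegral.hasFDerivAt_integral_of_dominated_of_fderiv_le (bound := fun _ => C) hs
    (.of_forall fun x => (hf x).aestronglyMeasurable) ((hf x₀).intervalIntegrable a b)
    hf'_cont.aestronglyMeasurable
    (.of_forall fun t ht x hx => hC x hx t (uIoc_subset_uIcc ht))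
    intervalIntegrable_const (.of_forall fun t _ x _ => hderiv x t)

variable [NullSingletonClass μ]

theorem hasFTaylorSeriesUpTo_intervalIntegral {n : WithTop ℕ∞} {f : E → ℝ → F}
    {p : E → ℝ → FormalMultilinearSeries ℝ E F}
    (hp : ∀ t, HasFTaylorSeriesUpTo n (fun x => f x t) (fun x => p x t))
    (hcont : ∀ m : ℕ, m ≤ n → Continuous ↿(fun x t => p x t m)) :
    HasFTaylorSeriesUpTo n (fun x => ∫ t in a..b, f x t ∂μ)
      (fun x m => ∫ t in a..b, p x t m ∂μ) where
  zero_eq x := by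
    have hcont_zero := (hcont 0 (by simp)).comp (Continuous.prodMk_right x)
    calc
      (∫ t in a..b, p x t 0 ∂μ) 0 = ∫ t in a..b, p x t 0 0 ∂μ :=
        intervalIntegral_continuousMultilinearMap_apply (hcont_zero.intervalIntegrable a b) 0
      _ = ∫ t in a..b, f x t ∂μ := intervalIntegral.integral_congr fun t _ => (hp t).zero_eq x
  fderiv m hm x := by
    have hsucc_le : ((m + 1 : ℕ) : WithTop ℕ∞) ≤ n := ENat.add_one_natCast_le_withTop_of_lt hm
    have hcont_succ := hcont (m + 1) hsucc_le
    have hderiv : HasFDerivAt (fun y => ∫ t in a..b, p y t m ∂μ)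
        (∫ t in a..b, (p x t (m + 1)).curryLeft ∂μ) x :=
      hasFDerivAt_intervalIntegral_of_continuous
        (fun y => (hcont m hm.le).comp (Continuous.prodMk_right y))
        ((continuousMultilinearCurryLeftEquiv ℝ (fun _ => E) F).continuous.comp hcont_succ)
        (fun y t => (hp t).fderiv m hm y) x
    exact hderiv.congr_fderiv <| intervalIntegral_continuousMultilinearMap_curryLeft
      (hcont_succ.comp (Continuous.prodMk_right x))
  cont m hm :=
    intervalIntegral.continuous_parametric_intervalIntegral_of_continuous' (hcont m hm) a b

theorem contDiff_intervalIntegral {n : ℕ∞} {f : E → ℝ → F} (hf : ContDiff ℝ n ↿f) :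
    ContDiff ℝ n fun x => ∫ t in a..b, f x t ∂μ := by
  refine (hasFTaylorSeriesUpTo_intervalIntegral (p := fun x t => ftaylorSeries ℝ (fun y => f y t) x)
    (fun t => ContDiff.ftaylorSeries (hf.comp (contDiff_id.prodMk contDiff_const)))
    fun m hm => ?_).contDiff
  have hpartial : ↿(fun x t => iteratedFDeriv ℝ m (fun y => f y t) x) = fun z : E × ℝ =>
      (iteratedFDeriv ℝ m (↿f) z).compContinuousLinearMap
        fun _ => ContinuousLinearMap.inl ℝ E ℝ :=
    funext fun z => iteratedFDeriv_comp_prodMk_left hf hm z.1 z.2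
  exact hpartial ▸ (ContinuousMultilinearMap.compContinuousLinearMapL _).continuous.comp
    (hf.continuous_iteratedFDeriv hm)

end ParametricIntegral

section TaylorRemainder

variable {E V F : Type*} [NormedAddCommGroup E] [NormedSpace ℝ E]
  [NormedAddCommGroup V] [NormedSpace ℝ V] [NormedAddCommGroup F] [NormedSpace ℝ F]

/-- The `j`-th derivative of `f` at `p` in the directions of the second factor. -/
noncomputable def iteratedFDerivSnd (j : ℕ) (f : E × V → F) (p : E × V) : V [×j]→L[ℝ] F :=
  (iteratedFDeriv ℝ j f p).compContinuousLinearMap fun _ => ContinuousLinearMap.inr ℝ E V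

/-- The multilinear form `R` for which `R (y, …, y)` is the remainder at `p = (x, y)` of the
`l`-th order Taylor expansion of `f` in the second variable around `(x, 0)`. -/
noncomputable def taylorRemainderSnd (l : ℕ) (f : E × V → F) (p : E × V) : V [×(l + 1)]→L[ℝ] F :=
  (l ! : ℝ)⁻¹ • ∫ t in (0 : ℝ)..1, (1 - t) ^ l • iteratedFDerivSnd (l + 1) f (p.1, t • p.2)

theorem contDiff_iteratedFDerivSnd {n N : WithTop ℕ∞} {j : ℕ} {f : E × V → F}
    (hf : ContDiff ℝ N f) (hN : n + j ≤ N) : ContDiff ℝ n (iteratedFDerivSnd j f) := by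
  let restrict : ((E × V) [×j]→L[ℝ] F) →L[ℝ] (V [×j]→L[ℝ] F) :=
    ContinuousMultilinearMap.compContinuousLinearMapL fun _ => ContinuousLinearMap.inr ℝ E V
  exact restrict.contDiff.comp (hf.iteratedFDeriv_right hN)

theorem contDiff_taylorRemainderSnd_integrand {n N : WithTop ℕ∞} {l : ℕ} {f : E × V → F}
    (hf : ContDiff ℝ N f) (hN : n + (l + 1 : ℕ) ≤ N) :
    ContDiff ℝ n ↿fun (p : E × V) (t : ℝ) =>
      (1 - t) ^ l • iteratedFDerivSnd (l + 1) f (p.1, t • p.2) := by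
  have hsegment : ContDiff ℝ n fun z : (E × V) × ℝ => (z.1.1, z.2 • z.1.2) := by fun_prop
  have hweight : ContDiff ℝ n fun z : (E × V) × ℝ => (1 - z.2) ^ l := by fun_prop
  exact hweight.smul ((contDiff_iteratedFDerivSnd hf hN).comp hsegment)

theorem taylorRemainderSnd_apply {l : ℕ} {f : E × V → F} (hf : ContDiff ℝ (l + 1 : ℕ) f)
    (p : E × V) (v : Fin (l + 1) → V) :
    taylorRemainderSnd l f p v = (l ! : ℝ)⁻¹ •
      ∫ t in (0 : ℝ)..1, (1 - t) ^ l • iteratedFDerivSnd (l + 1) f (p.1, t • p.2) v := by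
  have hcont : Continuous fun t : ℝ => (1 - t) ^ l • iteratedFDerivSnd (l + 1) f (p.1, t • p.2) :=
    (contDiff_taylorRemainderSnd_integrand (n := 0) hf (by simp)).continuous.comp
      (Continuous.prodMk_right p)
  exact congrArg ((l ! : ℝ)⁻¹ • ·) <|
    intervalIntegral_continuousMultilinearMap_apply (hcont.intervalIntegrable 0 1) v

theorem contDiff_taylorRemainderSnd {n : ℕ∞} {N : WithTop ℕ∞} {l : ℕ} {f : E × V → F}
    (hf : ContDiff ℝ N f) (hN : n + (l + 1 : ℕ) ≤ N) : ContDiff ℝ n (taylorRemainderSnd l f) :=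
  (contDiff_intervalIntegral (contDiff_taylorRemainderSnd_integrand hf hN)).const_smul _

theorem eq_sum_iteratedFDerivSnd_add_taylorRemainderSnd [CompleteSpace F] {l : ℕ} {f : E × V → F}
    (hf : ContDiff ℝ (l + 1 : ℕ) f) (x : E) (y : V) :
    f (x, y) = ∑ j ∈ Finset.range (l + 1), (j ! : ℝ)⁻¹ • iteratedFDerivSnd j f (x, 0) (fun _ => y)
      + taylorRemainderSnd l f (x, y) fun _ => y := by
  have htaylor := map_add_eq_sum_add_integral_iteratedFDeriv (f := f) (x := (x, 0)) (y := (0, y))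
    (n := l) fun t _ => hf.contDiffAt
  simpa [taylorRemainderSnd_apply hf, iteratedFDerivSnd, Function.comp_def] using htaylor

end TaylorRemainder

theorem multilinearMap_apply_eq_sum_repr {R M N ι κ : Type*} [CommSemiring R] [AddCommMonoid M]
    [AddCommMonoid N] [Module R M] [Module R N] [Fintype ι] [Fintype κ] [DecidableEq κ]
    (b : Module.Basis ι R M) (g : MultilinearMap R (fun _ : κ => M) N) (v : κ → M) :
    g v = ∑ r : κ → ι, (∏ a, b.repr (v a) (r a)) • g fun a => b (r a) := by
  calc
    g v = g fun a => ∑ i, b.repr (v a) i • b i := by simp only [b.sum_repr]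
    _ = ∑ r : κ → ι, g fun a => b.repr (v a) (r a) • b (r a) := g.map_sum _
    _ = _ := by simp only [g.map_smul_univ]

theorem stmt_0_general {E V F I : Type*} [NormedAddCommGroup E] [NormedSpace ℝ E]
    [NormedAddCommGroup V] [NormedSpace ℝ V] [NormedAddCommGroup F] [NormedSpace ℝ F]
    [CompleteSpace F] [Fintype I] (b : Module.Basis I ℝ V) (n : ℕ∞) (l : ℕ) (f : E × V → F)
    (hf : ContDiff ℝ (n + (l + 1 : ℕ)) f) :
    ∃ h : (Fin (l + 1) → I) → E × V → F,
      (∀ ι, ContDiff ℝ n (h ι)) ∧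
      ∀ x : E, ∀ y : V,
        f (x, y) =
          (∑ j ∈ Finset.range (l + 1), ((j ! : ℝ)⁻¹ •
            ∑ ι : Fin j → I,
              (∏ a, b.repr y (ι a)) • iteratedFDeriv ℝ j f (x, 0) fun a => (0, b (ι a))))
          + ∑ ι : Fin (l + 1) → I, (∏ a, b.repr y (ι a)) • h ι (x, y) := by
  refine ⟨fun ι p => taylorRemainderSnd l f p fun a => b (ι a), fun ι => ?_, fun x y => ?_⟩
  · exact (ContinuousMultilinearMap.apply ℝ _ F _).contDiff.comp
      (contDiff_taylorRemainderSnd hf le_rfl)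
  · have expand {j : ℕ} (g : V [×j]→L[ℝ] F) :
        (g fun _ => y) = ∑ ι : Fin j → I, (∏ a, b.repr y (ι a)) • g fun a => b (ι a) :=
      multilinearMap_apply_eq_sum_repr b g.toMultilinearMap fun _ => y
    rw [eq_sum_iteratedFDerivSnd_add_taylorRemainderSnd (hf.of_le le_add_self) x y]
    simp only [expand]
    rfl

theorem partialYList_ofFn {k m j : ℕ} {f : (Fin k → ℝ) × (Fin m → ℝ) → ℝ} (hf : ContDiff ℝ j f)
    (ι : Fin j → Fin m) :
    partialYList (List.ofFn ι) f =
      fun p => iteratedFDeriv ℝ j f p fun a => (0, Pi.single (ι a) 1) := by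
  induction j with
  | zero => rfl
  | succ j ih =>
    funext p
    have hdiff : DifferentiableAt ℝ (iteratedFDeriv ℝ j f) p :=
      hf.contDiffAt.differentiableAt_iteratedFDeriv (by exact_mod_cast j.lt_succ_self)
    rw [List.ofFn_succ, partialYList, ih (hf.of_le (by exact_mod_cast j.le_succ)), partialY,
      hdiff.iteratedFDeriv_succ_apply_left']
    rfl

/-- Parametrized Hadamard's lemma with higher-order remainder. -/
theorem stmt_0 (k m l : ℕ) (f : (Fin k → ℝ) × (Fin m → ℝ) → ℝ)
    (hf : ContDiff ℝ (⊤ : ℕ∞) f) :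
    ∃ h : (Fin (l + 1) → Fin m) → (Fin k → ℝ) × (Fin m → ℝ) → ℝ,
      (∀ ι, ContDiff ℝ (⊤ : ℕ∞) (h ι)) ∧
      ∀ x : Fin k → ℝ, ∀ y : Fin m → ℝ,
        f (x, y) =
          (∑ j ∈ Finset.range (l + 1), ((j.factorial : ℝ)⁻¹ *
            ∑ ι : Fin j → Fin m,
              (∏ a, y (ι a)) * partialYList (List.ofFn ι) f (x, 0)))
          + ∑ ι : Fin (l + 1) → Fin m,
              (∏ a, y (ι a)) * h ι (x, y) := by
  have hfinite (j : ℕ) : ContDiff ℝ j f := contDiff_infty.1 hf j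
  simpa [partialYList_ofFn (hfinite _)] using stmt_0_general (Pi.basisFun ℝ (Fin m)) ⊤ l f hf
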